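/- Let n ≥ 2 be an integer, m = 2n+4, and 𝒜 = { {1}, {2}, {2n+3}, {2n+4} } ∪ { S ⊆ {3,…,2n+2} : |S| = n }. Fix f > 0, define v^agg(x) = max{ f·y : y ∈ [0,1], ∑_{j∈S} x_j ≥ y for every S ∈ 𝒜 } for x ∈ [0,1]^m, and let g(x) = max{ ∑_{β∈{0,1}^m} α_β v^agg(β) : α_β ≥ 0, ∑_β α_β = 1, ∑_β α_β β = x } be the concavification of the restriction of v^agg to {0,1}^m. Then g(x) ≤ (6/n)·f for every x ∈ [0,1]^m with ∑_{j=1}^{m} x_j ≤ 6. -/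

import Mathlib

/-- `v^agg(x) = sup{ f·y : y ∈ [0,1], ∑_{j∈S} x_j ≥ y for every S ∈ 𝒜 }`. -/
noncomputable def vagg {N : Type*} (A : Set (Finset N)) (f : ℝ) (x : N → ℝ) : ℝ :=
  sSup {t | ∃ y : ℝ, y ∈ Set.Icc (0 : ℝ) 1 ∧
    (∀ S ∈ A, y ≤ ∑ j ∈ S, x j) ∧ t = f * y}

/-- The indicator vector (in `{0,1}^ℕ`) of a finite set `T` of node labels. -/
def indVec (T : Finset ℕ) : ℕ → ℝ := fun j => if j ∈ T then 1 else 0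

/-- The concavification of `h : {0,1}^m → ℝ`, where binary vectors on the node set
`{1,…,m}` are identified with subsets `T ⊆ {1,…,m}`:
`g(x) = max{ ∑_β α_β h(β) : α ≥ 0, ∑_β α_β = 1, ∑_β α_β β = x }`. -/
noncomputable def concavifyN (m : ℕ) (h : Finset ℕ → ℝ) (x : ℕ → ℝ) : ℝ :=
  sSup {t | ∃ α : Finset ℕ → ℝ,
    (∀ T ∈ (Finset.Icc 1 m).powerset, 0 ≤ α T) ∧
    (∑ T ∈ (Finset.Icc 1 m).powerset, α T) = 1 ∧
    (∀ j ∈ Finset.Icc 1 m, (∑ T ∈ (Finset.Icc 1 m).powerset, α T * indVec T j) = x j) ∧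
    t = ∑ T ∈ (Finset.Icc 1 m).powerset, α T * h T}

/-- The family of Proposition 4(ii): on the nodes `{1,…,2n+4}` (labelled by naturals),
`𝒜 = { {1}, {2}, {2n+3}, {2n+4} } ∪ { S ⊆ {3,…,2n+2} : |S| = n }`. -/
def A2 (n : ℕ) : Set (Finset ℕ) :=
  ({ {1}, {2}, {2 * n + 3}, {2 * n + 4} } : Set (Finset ℕ)) ∪
    {S : Finset ℕ | S ⊆ Finset.Icc 3 (2 * n + 2) ∧ S.card = n}

/-- On indicator vectors, `v^agg` of the family `A2 n` is at most `f·|T|/n`. -/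
theorem vagg_A2_indVec_le {n : ℕ} (hn : 0 < n) {f : ℝ} (hf : 0 ≤ f) (T : Finset ℕ) :
    vagg (A2 n) f (indVec T) ≤ f / n * T.card := by
  have hn' : (0 : ℝ) < n := by exact_mod_cast hn
  apply Real.sSup_le _ (by positivity)
  rintro t ⟨y, ⟨-, hy1⟩, hS, rfl⟩
  rw [div_mul_eq_mul_div, mul_div_assoc]
  refine mul_le_mul_of_nonneg_left ?_ hf
  by_cases hT : n ≤ T.card
  · refine hy1.trans ?_
    rw [one_le_div hn']
    exact_mod_cast hT
  · have hcard : n ≤ (Finset.Icc 3 (2 * n + 2) \ T).card := by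
      have h := Finset.le_card_sdiff T (Finset.Icc 3 (2 * n + 2))
      rw [Nat.card_Icc] at h
      omega
    obtain ⟨S, hSsub, hScard⟩ := Finset.exists_subset_card_eq hcard
    have hzero : ∑ j ∈ S, indVec T j = 0 :=
      Finset.sum_eq_zero fun j hj => if_neg (Finset.mem_sdiff.mp (hSsub hj)).2
    have hy := hS S (Or.inr ⟨hSsub.trans Finset.sdiff_subset, hScard⟩)
    rw [hzero] at hy
    exact hy.trans (by positivity)

theorem sum_indVec {s T : Finset ℕ} (hT : T ⊆ s) : ∑ j ∈ s, indVec T j = T.card := by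
  simp [indVec, Finset.inter_eq_right.mpr hT]

/-- A function bounded by `c·|T|` on `{0,1}^m` has concavification bounded by `c·∑ x_j`. -/
theorem concavifyN_le_mul_sum {m : ℕ} {h : Finset ℕ → ℝ} {x : ℕ → ℝ} {c : ℝ} (hc : 0 ≤ c)
    (hx : ∀ j ∈ Finset.Icc 1 m, 0 ≤ x j)
    (hh : ∀ T ⊆ Finset.Icc 1 m, h T ≤ c * T.card) :
    concavifyN m h x ≤ c * ∑ j ∈ Finset.Icc 1 m, x j := by
  apply Real.sSup_le _ (mul_nonneg hc (Finset.sum_nonneg hx))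
  rintro t ⟨α, hα, -, hαx, rfl⟩
  calc ∑ T ∈ (Finset.Icc 1 m).powerset, α T * h T
      ≤ ∑ T ∈ (Finset.Icc 1 m).powerset, c * ∑ j ∈ Finset.Icc 1 m, α T * indVec T j := by
        refine Finset.sum_le_sum fun T hT => ?_
        have hTs := Finset.mem_powerset.mp hT
        rw [← Finset.mul_sum, sum_indVec hTs, mul_left_comm]
        exact mul_le_mul_of_nonneg_left (hh T hTs) (hα T hT)
    _ = c * ∑ j ∈ Finset.Icc 1 m, x j := by
        rw [← Finset.mul_sum, Finset.sum_comm, Finset.sum_congr rfl hαx]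

/-- upper bound in the proof of Proposition 4(ii) of the paper.
On the instance `A2 n` with `m = 2n+4`, the concavification `g` of the restriction of
`v^agg` to binary points satisfies `g(x) ≤ (6/n)·f` for every `x ∈ [0,1]^m` with
`∑_{j=1}^m x_j ≤ 6`. -/
theorem stmt_17 (n : ℕ) (hn : 2 ≤ n) (f : ℝ) (hf : 0 < f) (x : ℕ → ℝ)
    (hx : ∀ j ∈ Finset.Icc 1 (2 * n + 4), x j ∈ Set.Icc (0 : ℝ) 1)
    (hb : (∑ j ∈ Finset.Icc 1 (2 * n + 4), x j) ≤ 6) :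
    concavifyN (2 * n + 4) (fun T => vagg (A2 n) f (indVec T)) x ≤ 6 / (n : ℝ) * f := by
  have hn' : 0 < n := by omega
  calc concavifyN (2 * n + 4) (fun T => vagg (A2 n) f (indVec T)) x
      ≤ f / n * ∑ j ∈ Finset.Icc 1 (2 * n + 4), x j :=
        concavifyN_le_mul_sum (by positivity) (fun j hj => (hx j hj).1)
          fun T _ => vagg_A2_indVec_le hn' hf.le T
    _ ≤ f / n * 6 := mul_le_mul_of_nonneg_left hb (by positivity)
    _ = 6 / (n : ℝ) * f := by ring
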